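/- arXiv:2107.08913 — 2 statements merged into one kernel-verified Lean document; each statement's English description precedes it below -/
import Mathlib

section
/- Let φ, ψ be generalized dyadic resolutions on ℝ^N (i.e., φ_j(x) = 2^{N(j-1)}φ_1(2^{j-1}x) for j ≥ 1 with φ_1 Schwartz having all vanishing moments, and similarly for ψ). Then for any M > 0 and multi-index γ there is C > 0 such that for all j, k ∈ ℕ and l ∈ ℤ, ∫_{|x| ≥ 2^{-l}} |D^γ(φ_j ∗ ψ_k)(x)| dx ≤ C · 2^{min(j,k)|γ| − M(|j−k| + max(j,k) − l)}. -/
open MeasureTheory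

lemma aux_norm_iter {E V : Type*} [NormedAddCommGroup E] [NormedSpace ℝ E]
    [NormedAddCommGroup V] [NormedSpace ℝ V] (f : E → V) (m : ℕ) :
    ∀ (P : ℕ) (x : E), ‖iteratedFDeriv ℝ P (iteratedFDeriv ℝ m f) x‖
      = ‖iteratedFDeriv ℝ (P + m) f x‖ := by
  induction m with
  | zero =>
    intro P x
    have : iteratedFDeriv ℝ 0 f =
        (continuousMultilinearCurryFin0 ℝ E V).symm ∘ f := by
      ext; simp
    rw [this, LinearIsometryEquiv.norm_iteratedFDeriv_comp_left]
    rfl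
  | succ m ih =>
    intro P x
    have h := LinearIsometryEquiv.norm_iteratedFDeriv_comp_left (𝕜 := ℝ)
      (continuousMultilinearCurryLeftEquiv ℝ (fun _ : Fin (m+1) => E) V).symm
      (fderiv ℝ (iteratedFDeriv ℝ m f)) x P
    rw [norm_iteratedFDeriv_fderiv, ih, show P + 1 + m = P + (m + 1) by ring] at h
    rw [iteratedFDeriv_succ_eq_comp_left]
    exact h

lemma aux_hasFDeriv_conv {E V : Type*} [NormedAddCommGroup E] [NormedSpace ℝ E]
    [FiniteDimensional ℝ E] [MeasurableSpace E] [BorelSpace E] (μ : Measure E)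
    [NormedAddCommGroup V] [NormedSpace ℝ V] (H : E → ℝ) (hH : Continuous H)
    (hHi : Integrable H μ) (F : E → V) (hF : ContDiff ℝ 1 F) (B B' : ℝ)
    (hB : ∀ x, ‖F x‖ ≤ B) (hB' : ∀ x, ‖fderiv ℝ F x‖ ≤ B') (x : E) :
    HasFDerivAt (fun x => ∫ y, H y • F (x - y) ∂μ) (∫ y, H y • fderiv ℝ F (x - y) ∂μ) x := by
  have hmeas : ∀ x, AEStronglyMeasurable (fun y => H y • F (x - y)) μ := fun x =>
    (hH.smul (hF.continuous.comp (continuous_const.sub continuous_id))).aestronglyMeasurable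
  have hfc : Continuous (fderiv ℝ F) := hF.continuous_fderiv one_ne_zero
  refine hasFDerivAt_integral_of_dominated_of_fderiv_le (s := Set.univ)
    (F' := fun x y => H y • fderiv ℝ F (x - y))
    (bound := fun y => ‖H y‖ * B') Filter.univ_mem
    (Filter.Eventually.of_forall hmeas) ?_ ?_ ?_
    (hHi.norm.mul_const _) ?_
  · refine Integrable.mono' (hHi.norm.mul_const B) (hmeas x) ?_
    filter_upwards with y
    rw [norm_smul]
    gcongr
    exact hB _
  · exact (hH.smul (hfc.comp (continuous_const.sub continuous_id))).aestronglyMeasurable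
  · filter_upwards with y x _
    rw [norm_smul]
    gcongr
    exact hB' _
  · filter_upwards with y x _
    have h1 : HasFDerivAt (fun x => F (x - y)) (fderiv ℝ F (x - y)) x := by
      have := ((hF.differentiable one_ne_zero) (x - y)).hasFDerivAt.comp x
        ((hasFDerivAt_id x).sub_const y)
      simpa using! this
    exact h1.const_smul (H y)

/-- Derivatives of a convolution fall on the second factor. -/
lemma aux_iter_conv {E : Type*} [NormedAddCommGroup E] [NormedSpace ℝ E]
    [FiniteDimensional ℝ E] [MeasurableSpace E] [BorelSpace E] (μ : Measure E)
    [μ.HasTemperateGrowth] (G H : SchwartzMap E ℝ) (m : ℕ) :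
    iteratedFDeriv ℝ m (fun z : E => ∫ y, H y * G (z - y) ∂μ)
      = fun x => ∫ y, H y • iteratedFDeriv ℝ m G (x - y) ∂μ := by
  have hcd : ∀ m : ℕ, Continuous (iteratedFDeriv ℝ m G) := fun m =>
    (G.smooth ⊤).continuous_iteratedFDeriv (mod_cast le_top)
  have hbd : ∀ (m : ℕ) x, ‖iteratedFDeriv ℝ m G x‖ ≤ SchwartzMap.seminorm ℝ 0 m G :=
    fun m x => SchwartzMap.norm_iteratedFDeriv_le_seminorm ℝ _ _ _
  have hint : ∀ (m : ℕ) x, Integrable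
      (fun y => H y • iteratedFDeriv ℝ m G (x - y)) μ := by
    intro m x
    refine Integrable.mono' ((H.integrable (μ := μ)).norm.mul_const (SchwartzMap.seminorm ℝ 0 m G))
      (H.continuous.smul ((hcd m).comp
        (continuous_const.sub continuous_id))).aestronglyMeasurable ?_
    filter_upwards with y
    rw [norm_smul]
    gcongr
    exact hbd _ _
  induction m with
  | zero =>
    ext x v
    rw [iteratedFDeriv_zero_apply]
    have := ((ContinuousMultilinearMap.apply ℝ (fun _ : Fin 0 => E) ℝ v).integral_comp_comm
      (hint 0 x))
    simp at this
    rw [← this]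
  | succ m ih =>
    have hfd : ∀ x, fderiv ℝ (iteratedFDeriv ℝ m G) x =
        (continuousMultilinearCurryLeftEquiv ℝ (fun _ : Fin (m+1) => E) ℝ)
          (iteratedFDeriv ℝ (m+1) G x) := by
      intro x
      rw [iteratedFDeriv_succ_eq_comp_left]; simp
    rw [iteratedFDeriv_succ_eq_comp_left, ih]
    ext1 x
    have key := aux_hasFDeriv_conv μ H H.continuous H.integrable (iteratedFDeriv ℝ m G)
      ((G.smooth (1 + m : ℕ)).iteratedFDeriv_right (by norm_cast)) _ _ (hbd m)
      (fun x => by rw [hfd, LinearIsometryEquiv.norm_map]; exact hbd (m+1) x) x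
    rw [Function.comp_apply, key.fderiv]
    have h2 : ∫ y, H y • fderiv ℝ (iteratedFDeriv ℝ m G) (x - y) ∂μ
        = (continuousMultilinearCurryLeftEquiv ℝ (fun _ : Fin (m+1) => E) ℝ)
          (∫ y, H y • iteratedFDeriv ℝ (m+1) G (x - y) ∂μ) := by
      let T : (E [×(m+1)]→L[ℝ] ℝ) →L[ℝ] (E →L[ℝ] E [×m]→L[ℝ] ℝ) :=
        (continuousMultilinearCurryLeftEquiv ℝ (fun _ : Fin (m+1) => E)
          ℝ).toContinuousLinearEquiv.toContinuousLinearMap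
      have h3 := ContinuousLinearMap.integral_comp_comm (𝕜 := ℝ) (μ := μ)
        (Fₗ := E →L[ℝ] E [×m]→L[ℝ] ℝ) T (hint (m+1) x)
      refine Eq.trans ?_ h3
      refine integral_congr_ae (Filter.Eventually.of_forall fun y => ?_)
      simp only [hfd]
      rfl
    rw [h2]
    exact LinearIsometryEquiv.symm_apply_apply _ _

/-- Vanishing moments kill homogeneous polynomials. -/
lemma aux_moment {N : ℕ} (H : SchwartzMap (EuclideanSpace ℝ (Fin N)) ℝ)
    (hH : ∀ α : Fin N → ℕ,
      (∫ x : EuclideanSpace ℝ (Fin N), (∏ i, x i ^ α i) * H x) = 0)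
    {V : Type*} [NormedAddCommGroup V] [NormedSpace ℝ V] [CompleteSpace V] (p : ℕ)
    (L : ContinuousMultilinearMap ℝ (fun _ : Fin p => EuclideanSpace ℝ (Fin N)) V) :
    Integrable (fun y => H y • L (fun _ => y)) ∧ ∫ y, H y • L (fun _ => y) = 0 := by
  have hI : ∀ r : Fin p → Fin N, Integrable (fun y : EuclideanSpace ℝ (Fin N) =>
      H y * ∏ i, y (r i)) := by
    intro r
    refine Integrable.mono' (H.integrable_pow_mul volume p) ?_ ?_
    · refine (H.continuous.mul (continuous_finsetProd _ fun i _ => ?_)).aestronglyMeasurable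
      fun_prop
    · filter_upwards with y
      rw [norm_mul, mul_comm, norm_prod]
      gcongr
      calc ∏ i, ‖y (r i)‖ ≤ ∏ i : Fin p, ‖y‖ :=
            Finset.prod_le_prod (fun _ _ => norm_nonneg _) (fun i _ => PiLp.norm_apply_le y (r i))
        _ = _ := by simp
  have hexp : ∀ y : EuclideanSpace ℝ (Fin N), H y • L (fun _ => y) =
      ∑ r : Fin p → Fin N, (H y * ∏ i, y (r i)) • L (fun i => EuclideanSpace.single (r i) 1) := by
    intro y
    have hy : y = ∑ j, y j • EuclideanSpace.single j (1:ℝ) := by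
      conv_lhs => rw [← (EuclideanSpace.basisFun (Fin N) ℝ).sum_repr y]
      simp
    conv_lhs => rw [show (fun _ : Fin p => y) = fun _ => ∑ j, y j • EuclideanSpace.single j (1:ℝ) from
      funext fun _ => hy]
    rw [L.map_sum, Finset.smul_sum]
    refine Finset.sum_congr rfl fun r _ => ?_
    rw [L.map_smul_univ, smul_smul]
  have hz : ∀ r : Fin p → Fin N, ∫ y : EuclideanSpace ℝ (Fin N), H y * ∏ i, y (r i) = 0 := by
    intro r
    rw [← hH (fun j => (Finset.univ.filter (fun i => r i = j)).card)]
    congr 1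
    ext1 y
    rw [mul_comm]
    congr 1
    rw [← Finset.prod_fiberwise Finset.univ r]
    refine Finset.prod_congr rfl fun j _ => ?_
    rw [Finset.prod_congr rfl (g := fun _ => y j)]
    · simp
    · intro i hi
      simp at hi
      rw [hi]
  simp_rw [hexp]
  refine ⟨integrable_finsetSum _ fun r _ => (hI r).smul_const _, ?_⟩
  rw [integral_finsetSum _ fun r _ => (hI r).smul_const _]
  simp_rw [integral_smul_const, hz]
  simp

lemma aux_moment_scale {N : ℕ} (H ψ : SchwartzMap (EuclideanSpace ℝ (Fin N)) ℝ) (c R : ℝ)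
    (h : ∀ x, H x = c * ψ (R • x)) (hR : R ≠ 0)
    (hψm : ∀ α : Fin N → ℕ,
      (∫ x : EuclideanSpace ℝ (Fin N), (∏ i, x i ^ α i) * ψ x) = 0) :
    ∀ α : Fin N → ℕ, (∫ x : EuclideanSpace ℝ (Fin N), (∏ i, x i ^ α i) * H x) = 0 := by
  intro α
  have h1 := Measure.integral_comp_smul volume
    (fun x : EuclideanSpace ℝ (Fin N) => (∏ i, x i ^ α i) * ψ x) R
  rw [hψm α, smul_zero] at h1
  have h2 : ∀ x : EuclideanSpace ℝ (Fin N), (∏ i, x i ^ α i) * H x =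
      (c * (R ^ (∑ i, α i))⁻¹) * ((∏ i, (R • x) i ^ α i) * ψ (R • x)) := by
    intro x
    rw [h]
    simp only [PiLp.smul_apply, smul_eq_mul, mul_pow, Finset.prod_mul_distrib,
      Finset.prod_pow_eq_pow_sum]
    field_simp
  simp_rw [h2]
  rw [integral_const_mul, h1, mul_zero]

/-- uniform bounds for the dilates -/
lemma aux_family {N : ℕ} (Φ : ℕ → SchwartzMap (EuclideanSpace ℝ (Fin N)) ℝ)
    (φ₁ : SchwartzMap (EuclideanSpace ℝ (Fin N)) ℝ)
    (hΦ : ∀ j, 1 ≤ j → ∀ x,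
      Φ j x = (2 : ℝ) ^ (N * (j - 1)) * φ₁ ((2 : ℝ) ^ (j - 1) • x)) (p K : ℕ) :
    ∃ C > 0, ∀ (j : ℕ) (x : EuclideanSpace ℝ (Fin N)),
      (1 + 2 ^ j * ‖x‖) ^ K * ‖iteratedFDeriv ℝ p (Φ j) x‖ ≤ C * ((2:ℝ) ^ j) ^ (N + p) := by
  have hb : ∀ f : SchwartzMap (EuclideanSpace ℝ (Fin N)) ℝ, ∃ C > 0, ∀ x,
      (1 + ‖x‖) ^ K * ‖iteratedFDeriv ℝ p f x‖ ≤ C := by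
    intro f
    refine ⟨_ + 1, ?_, fun x => (SchwartzMap.one_add_le_sup_seminorm_apply (𝕜 := ℝ) (m := (K, p))
      le_rfl le_rfl f x).trans (le_add_of_nonneg_right zero_le_one)⟩
    positivity
  obtain ⟨C0, hC0, h0⟩ := hb (Φ 0)
  obtain ⟨C1, hC1, h1⟩ := hb φ₁
  refine ⟨C0 + 2 ^ K * C1, by positivity, fun j x => ?_⟩
  rcases Nat.eq_zero_or_pos j with rfl | hj
  · simp only [pow_zero, one_mul, one_pow, mul_one]
    have := h0 x
    have : 0 ≤ 2 ^ K * C1 := by positivity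
    linarith [h0 x]
  · obtain ⟨i, rfl⟩ : ∃ i, j = i + 1 := ⟨j - 1, by omega⟩
    have e : (Φ (i+1) : EuclideanSpace ℝ (Fin N) → ℝ) =
        fun x => (2:ℝ) ^ (N * i) • φ₁ ((2:ℝ) ^ i • x) := by
      ext x; rw [hΦ _ hj]; simp
    have hcd : ContDiff ℝ p (φ₁ : EuclideanSpace ℝ (Fin N) → ℝ) := φ₁.smooth p
    rw [e, iteratedFDeriv_const_smul_apply', iteratedFDeriv_comp_const_smul _ hcd]
    swap
    · exact (hcd.comp (contDiff_const_smul _)).contDiffAt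
    rw [norm_smul, norm_smul]
    have hA : (1 + 2 ^ (i+1) * ‖x‖) ^ K ≤ 2 ^ K * (1 + ‖(2:ℝ)^i • x‖) ^ K := by
      rw [← mul_pow]
      gcongr
      rw [norm_smul, norm_pow, Real.norm_ofNat, pow_succ]
      linarith
    have hB := h1 ((2:ℝ)^i • x)
    simp only [norm_pow, Real.norm_ofNat]
    calc _ ≤ (2 ^ K * (1 + ‖(2:ℝ)^i • x‖) ^ K) * (2 ^ (N * i) * ((2 ^ i) ^ p *
            ‖iteratedFDeriv ℝ p φ₁ ((2:ℝ) ^ i • x)‖)) := by gcongr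
      _ = 2 ^ K * ((1 + ‖(2:ℝ)^i • x‖) ^ K * ‖iteratedFDeriv ℝ p φ₁ ((2:ℝ) ^ i • x)‖)
            * ((2 ^ i) ^ (N + p)) := by ring
      _ ≤ 2 ^ K * C1 * (2 ^ (i+1)) ^ (N + p) := by
          gcongr
          · norm_num
          · omega
      _ ≤ _ := by gcongr; linarith

lemma aux_J_int (N : ℕ) : Integrable
    (fun y : EuclideanSpace ℝ (Fin N) => ((1 + ‖y‖) ^ (N + 1))⁻¹) := by
  have h := integrable_one_add_norm (E := EuclideanSpace ℝ (Fin N)) (μ := volume)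
    (r := ((N + 1 : ℕ) : ℝ)) (by simp)
  refine h.congr (Filter.Eventually.of_forall fun y => ?_)
  have : (0:ℝ) ≤ 1 + ‖y‖ := by positivity
  simp only
  rw [Real.rpow_neg this, Real.rpow_natCast]

lemma aux_J_scale (N : ℕ) (b : ℝ) (hb : 0 < b) :
    Integrable (fun y : EuclideanSpace ℝ (Fin N) => ((1 + b * ‖y‖) ^ (N + 1))⁻¹) ∧
    ∫ y : EuclideanSpace ℝ (Fin N), ((1 + b * ‖y‖) ^ (N + 1))⁻¹ =
      (b ^ N)⁻¹ * ∫ y : EuclideanSpace ℝ (Fin N), ((1 + ‖y‖) ^ (N + 1))⁻¹ := by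
  have e : (fun y : EuclideanSpace ℝ (Fin N) => ((1 + b * ‖y‖) ^ (N + 1))⁻¹) =
      fun y => (fun z : EuclideanSpace ℝ (Fin N) => ((1 + ‖z‖) ^ (N + 1))⁻¹) (b • y) := by
    ext y
    simp only [norm_smul, Real.norm_eq_abs, abs_of_pos hb]
  constructor
  · rw [e]
    exact (aux_J_int N).comp_smul hb.ne'
  · have := Measure.integral_comp_smul volume
      (fun z : EuclideanSpace ℝ (Fin N) => ((1 + ‖z‖) ^ (N + 1))⁻¹) b
    rw [e, this, abs_of_nonneg (by positivity)]
    simp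

lemma aux_H_int {N : ℕ} (H : SchwartzMap (EuclideanSpace ℝ (Fin N)) ℝ) (K P : ℕ) (a b B : ℝ)
    (ha : 0 ≤ a) (hab : a ≤ b) (hb : 0 < b)
    (hB : ∀ y, (1 + b * ‖y‖) ^ (K + P + (N + 1)) * ‖H y‖ ≤ B * b ^ N) :
    Integrable (fun y => ‖H y‖ * (‖y‖ ^ P * (1 + a * ‖y‖) ^ K)) ∧
    ∫ y, ‖H y‖ * (‖y‖ ^ P * (1 + a * ‖y‖) ^ K) ≤
      B * (b ^ P)⁻¹ * ∫ y : EuclideanSpace ℝ (Fin N), ((1 + ‖y‖) ^ (N + 1))⁻¹ := by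
  obtain ⟨hJ, hJe⟩ := aux_J_scale N b hb
  have hpt : ∀ y, ‖H y‖ * (‖y‖ ^ P * (1 + a * ‖y‖) ^ K) ≤
      (B * b ^ N * (b ^ P)⁻¹) * ((1 + b * ‖y‖) ^ (N + 1))⁻¹ := by
    intro y
    have h1 : (0:ℝ) < 1 + b * ‖y‖ := by positivity
    have h2 : b ^ P * (‖y‖ ^ P * (1 + a * ‖y‖) ^ K) ≤ (1 + b * ‖y‖) ^ (K + P) := by
      rw [← mul_assoc, ← mul_pow, pow_add, mul_comm]
      gcongr
      linarith
    rw [mul_assoc, ← mul_inv, ← div_eq_mul_inv, le_div_iff₀ (by positivity)]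
    calc _ = (b ^ P * (‖y‖ ^ P * (1 + a * ‖y‖) ^ K)) * (1 + b * ‖y‖) ^ (N + 1) * ‖H y‖ := by ring
      _ ≤ (1 + b * ‖y‖) ^ (K + P) * (1 + b * ‖y‖) ^ (N + 1) * ‖H y‖ := by gcongr
      _ ≤ _ := by rw [← pow_add]; exact hB y
  have hI : Integrable (fun y => ‖H y‖ * (‖y‖ ^ P * (1 + a * ‖y‖) ^ K)) := by
    refine (hJ.const_mul (B * b ^ N * (b ^ P)⁻¹)).mono' ?_ ?_
    · have := H.continuous
      exact Continuous.aestronglyMeasurable (by fun_prop)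
    · filter_upwards with y
      rw [Real.norm_of_nonneg (by positivity)]
      exact hpt y
  refine ⟨hI, (integral_mono hI (hJ.const_mul _) hpt).trans (le_of_eq ?_)⟩
  rw [integral_const_mul, hJe]
  field_simp

lemma aux_point {N : ℕ} (G H : SchwartzMap (EuclideanSpace ℝ (Fin N)) ℝ) (m P K : ℕ) (A a : ℝ)
    (ha : 0 ≤ a)
    (hA : ∀ x, (1 + a * ‖x‖) ^ K * ‖iteratedFDeriv ℝ (P + m) G x‖ ≤ A)
    (hI : Integrable (fun y => ‖H y‖ * (‖y‖ ^ P * (1 + a * ‖y‖) ^ K)))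
    (hH : P = 0 ∨ ∀ α : Fin N → ℕ,
      (∫ x : EuclideanSpace ℝ (Fin N), (∏ i, x i ^ α i) * H x) = 0)
    (x : EuclideanSpace ℝ (Fin N)) :
    (1 + a * ‖x‖) ^ K * ‖∫ y, H y • iteratedFDeriv ℝ m G (x - y)‖ ≤
      A * ∫ y, ‖H y‖ * (‖y‖ ^ P * (1 + a * ‖y‖) ^ K) := by
  set F := iteratedFDeriv ℝ m G with hF
  have hFc : Continuous F := (G.smooth ⊤).continuous_iteratedFDeriv (mod_cast le_top)
  have hx0 : (0:ℝ) < (1 + a * ‖x‖) ^ K := by positivity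
  have hA0 : 0 ≤ A := le_trans (by positivity) (hA 0)
  have hpe : ∀ (y : EuclideanSpace ℝ (Fin N)) (t : ℝ), 0 ≤ t → t ≤ 1 →
      ‖iteratedFDeriv ℝ P F (x + t • (-y))‖ ≤ A / (1 + a * ‖x‖) ^ K * (1 + a * ‖y‖) ^ K := by
    intro y t ht0 ht1
    rw [hF, aux_norm_iter, div_mul_eq_mul_div, le_div_iff₀ hx0]
    set z := x + t • (-y) with hz
    have h1 : (1 + a * ‖x‖) ≤ (1 + a * ‖z‖) * (1 + a * ‖y‖) := by
      have hxz : ‖x‖ ≤ ‖z‖ + ‖y‖ := by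
        have : x = z + t • y := by rw [hz]; simp
        calc ‖x‖ = ‖z + t • y‖ := by rw [← this]
          _ ≤ ‖z‖ + ‖t • y‖ := norm_add_le _ _
          _ ≤ ‖z‖ + ‖y‖ := by
            rw [norm_smul, Real.norm_of_nonneg ht0]
            have := mul_le_mul_of_nonneg_right ht1 (norm_nonneg y)
            linarith
      have h3 := mul_le_mul_of_nonneg_left hxz ha
      have h4 : 0 ≤ (a * ‖z‖) * (a * ‖y‖) := by positivity
      nlinarith
    calc _ ≤ ‖iteratedFDeriv ℝ (P + m) G z‖ * ((1 + a * ‖z‖) * (1 + a * ‖y‖)) ^ K := by gcongr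
      _ = ((1 + a * ‖z‖) ^ K * ‖iteratedFDeriv ℝ (P + m) G z‖) * (1 + a * ‖y‖) ^ K := by
        rw [mul_pow]; ring
      _ ≤ _ := by gcongr; exact hA z
  obtain ⟨R, hR1, hR2⟩ : ∃ R : EuclideanSpace ℝ (Fin N) →
        (EuclideanSpace ℝ (Fin N) [×m]→L[ℝ] ℝ),
      (∫ y, H y • F (x - y) = ∫ y, H y • R y) ∧
      ∀ y, ‖R y‖ ≤ ‖y‖ ^ P * (A / (1 + a * ‖x‖) ^ K * (1 + a * ‖y‖) ^ K) := by
    rcases P with _ | n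
    · refine ⟨fun y => F (x - y), rfl, fun y => ?_⟩
      have := hpe y 1 zero_le_one le_rfl
      rw [norm_iteratedFDeriv_zero] at this
      simpa [sub_eq_add_neg] using this
    · have hH' := hH.resolve_left (by omega)
      have hT : ∀ y, F (x - y) = ∑ k ∈ Finset.range (n + 1), ((k.factorial : ℝ))⁻¹ •
          (iteratedFDeriv ℝ k F x (fun _ ↦ -y)) + ((n.factorial : ℝ))⁻¹ • ∫ t in (0:ℝ)..1,
            (1 - t)^n • iteratedFDeriv ℝ (n + 1) F (x + t • (-y)) (fun _ ↦ -y) := by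
        intro y
        rw [sub_eq_add_neg]
        refine map_add_eq_sum_add_integral_iteratedFDeriv fun t _ => ?_
        exact ((G.smooth (n + 1 + m : ℕ)).iteratedFDeriv_right (by norm_cast)).contDiffAt
      refine ⟨fun y => ((n.factorial : ℝ))⁻¹ • ∫ t in (0:ℝ)..1,
            (1 - t)^n • iteratedFDeriv ℝ (n + 1) F (x + t • (-y)) (fun _ ↦ -y), ?_, fun y => ?_⟩
      · have hmom : ∀ k : ℕ, Integrable (fun y => H y • (((k.factorial : ℝ))⁻¹ •
            (iteratedFDeriv ℝ k F x (fun _ ↦ -y)))) ∧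
            ∫ y, H y • (((k.factorial : ℝ))⁻¹ • (iteratedFDeriv ℝ k F x (fun _ ↦ -y))) = 0 := by
          intro k
          obtain ⟨h1, h2⟩ := aux_moment H hH' k (iteratedFDeriv ℝ k F x)
          have e : ∀ y : EuclideanSpace ℝ (Fin N), H y • (((k.factorial : ℝ))⁻¹ •
              (iteratedFDeriv ℝ k F x (fun _ ↦ -y))) =
              (((k.factorial : ℝ))⁻¹ * (-1) ^ k) • (H y • iteratedFDeriv ℝ k F x (fun _ ↦ y)) := by
            intro y
            have : iteratedFDeriv ℝ k F x (fun _ ↦ -y) =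
                ((-1:ℝ) ^ k) • iteratedFDeriv ℝ k F x (fun _ ↦ y) := by
              have := (iteratedFDeriv ℝ k F x).map_smul_univ (fun _ => (-1:ℝ)) (fun _ => y)
              simpa using this
            rw [this, smul_smul, smul_smul, smul_smul]
            congr 1
            ring
          simp_rw [e]
          refine ⟨h1.fun_smul _, ?_⟩
          rw [integral_smul, h2, smul_zero]
        have hS : Integrable (fun y => H y • ∑ k ∈ Finset.range (n + 1), ((k.factorial : ℝ))⁻¹ •
            (iteratedFDeriv ℝ k F x (fun _ ↦ -y))) := by
          simp_rw [Finset.smul_sum]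
          exact integrable_finsetSum _ fun k _ => (hmom k).1
        have hS0 : ∫ y, H y • ∑ k ∈ Finset.range (n + 1), ((k.factorial : ℝ))⁻¹ •
            (iteratedFDeriv ℝ k F x (fun _ ↦ -y)) = 0 := by
          simp_rw [Finset.smul_sum]
          rw [integral_finsetSum _ fun k _ => (hmom k).1]
          exact Finset.sum_eq_zero fun k _ => (hmom k).2
        have hFi : Integrable (fun y => H y • F (x - y)) := by
          refine Integrable.mono' ((H.integrable (μ := volume)).norm.mul_const
            (SchwartzMap.seminorm ℝ 0 m G))
            (H.continuous.smul (hFc.comp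
              (continuous_const.sub continuous_id))).aestronglyMeasurable ?_
          filter_upwards with y
          rw [norm_smul]
          gcongr
          exact SchwartzMap.norm_iteratedFDeriv_le_seminorm ℝ _ _ _
        have h5 := integral_sub hFi hS
        rw [hS0, sub_zero] at h5
        rw [← h5]
        congr 1
        ext1 y
        rw [← smul_sub, hT y]
        congr 1
        exact add_sub_cancel_left _ _
      · have hfac : (1:ℝ) ≤ n.factorial := by exact_mod_cast n.factorial_pos
        have hin : ‖∫ t in (0:ℝ)..1,
            (1 - t)^n • iteratedFDeriv ℝ (n + 1) F (x + t • (-y)) (fun _ ↦ -y)‖ ≤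
            (‖y‖ ^ (n+1) * (A / (1 + a * ‖x‖) ^ K * (1 + a * ‖y‖) ^ K)) * |(1:ℝ) - 0| := by
          refine intervalIntegral.norm_integral_le_of_norm_le_const fun t ht => ?_
          rw [Set.uIoc_of_le zero_le_one] at ht
          rw [norm_smul, Real.norm_of_nonneg (pow_nonneg (by linarith [ht.2]) _)]
          have h6 : ((1:ℝ) - t) ^ n ≤ 1 := pow_le_one₀ (by linarith [ht.2]) (by linarith [ht.1])
          have h7 := (iteratedFDeriv ℝ (n + 1) F (x + t • (-y))).le_opNorm (fun _ ↦ -y)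
          simp only [norm_neg, Finset.prod_const, Finset.card_univ, Fintype.card_fin] at h7
          calc _ ≤ 1 * (‖iteratedFDeriv ℝ (n + 1) F (x + t • (-y))‖ * ‖y‖ ^ (n+1)) := by
                gcongr
            _ = ‖y‖ ^ (n+1) * ‖iteratedFDeriv ℝ (n + 1) F (x + t • (-y))‖ := by ring
            _ ≤ _ := by gcongr; exact hpe y t ht.1.le ht.2
        simp only [sub_zero, abs_one, mul_one] at hin
        rw [norm_smul, Real.norm_of_nonneg (by positivity)]
        calc _ ≤ 1 * ‖∫ t in (0:ℝ)..1,
            (1 - t)^n • iteratedFDeriv ℝ (n + 1) F (x + t • (-y)) (fun _ ↦ -y)‖ := by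
              gcongr
              exact inv_le_one_of_one_le₀ hfac
          _ ≤ _ := by rw [one_mul]; exact hin
  rw [hR1]
  have h8 : ‖∫ y, H y • R y‖ ≤ ∫ y, (A / (1 + a * ‖x‖) ^ K) *
      (‖H y‖ * (‖y‖ ^ P * (1 + a * ‖y‖) ^ K)) := by
    refine norm_integral_le_of_norm_le (hI.const_mul _) ?_
    filter_upwards with y
    rw [norm_smul]
    calc _ ≤ ‖H y‖ * (‖y‖ ^ P * (A / (1 + a * ‖x‖) ^ K * (1 + a * ‖y‖) ^ K)) := by
          gcongr; exact hR2 y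
      _ = _ := by ring
  rw [integral_const_mul] at h8
  calc _ ≤ (1 + a * ‖x‖) ^ K * (A / (1 + a * ‖x‖) ^ K *
        ∫ y, ‖H y‖ * (‖y‖ ^ P * (1 + a * ‖y‖) ^ K)) := by gcongr
    _ = _ := by field_simp

lemma aux_claim (N : ℕ) (M : ℝ) (hM : 0 < M) (m P : ℕ)
    (Φ Ψ : ℕ → SchwartzMap (EuclideanSpace ℝ (Fin N)) ℝ)
    (φ₁ ψ₁ : SchwartzMap (EuclideanSpace ℝ (Fin N)) ℝ)
    (hΦ : ∀ j, 1 ≤ j → ∀ x,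
      Φ j x = (2 : ℝ) ^ (N * (j - 1)) * φ₁ ((2 : ℝ) ^ (j - 1) • x))
    (hΨ : ∀ j, 1 ≤ j → ∀ x,
      Ψ j x = (2 : ℝ) ^ (N * (j - 1)) * ψ₁ ((2 : ℝ) ^ (j - 1) • x))
    (hψm : ∀ α : Fin N → ℕ,
      (∫ x : EuclideanSpace ℝ (Fin N), (∏ i, x i ^ α i) * ψ₁ x) = 0) :
    ∃ C > 0, ∀ (j k : ℕ) (l : ℤ), j ≤ k → (P = 0 ∨ 1 ≤ k) →
      (∫ x in {x : EuclideanSpace ℝ (Fin N) | (2 : ℝ) ^ (-l) ≤ ‖x‖},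
          ‖iteratedFDeriv ℝ m
            (fun z : EuclideanSpace ℝ (Fin N) =>
              ∫ y : EuclideanSpace ℝ (Fin N), Ψ k y * Φ j (z - y)) x‖)
        ≤ C * (((2:ℝ) ^ j) ^ (m + P) * (((2:ℝ) ^ k) ^ P)⁻¹) *
          (2:ℝ) ^ (-(M * ((j:ℝ) - (l:ℝ)))) := by
  set K := ⌈M⌉₊ + (N + 1) with hK
  obtain ⟨A, hA0, hA⟩ := aux_family Φ φ₁ hΦ (P + m) K
  obtain ⟨B, hB0, hB⟩ := aux_family Ψ ψ₁ hΨ 0 (K + P + (N + 1))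
  set I := ∫ y : EuclideanSpace ℝ (Fin N), ((1 + ‖y‖) ^ (N + 1))⁻¹ with hIdef
  have hI0 : 0 ≤ I := integral_nonneg fun y => by positivity
  refine ⟨A * B * (I * I) + 1, by positivity, fun j k l hjk hPk => ?_⟩
  set a : ℝ := 2 ^ j with ha
  set b : ℝ := 2 ^ k with hb
  have ha0 : 0 < a := by positivity
  have hb0 : 0 < b := by positivity
  have hab : a ≤ b := pow_le_pow_right₀ (by norm_num) hjk
  obtain ⟨hHi, hHb⟩ := aux_H_int (Ψ k) K P a b B ha0.le hab hb0 (fun y => by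
    simpa using hB k y)
  set T : ℝ := (2:ℝ) ^ (-(M * ((j:ℝ) - (l:ℝ)))) with hT
  have hT0 : 0 < T := by positivity
  set Q : ℝ := A * a ^ (N + (P + m)) * (B * (b ^ P)⁻¹ * I) with hQ
  have hQ0 : 0 ≤ Q := by positivity
  have hpt : ∀ x : EuclideanSpace ℝ (Fin N), (1 + a * ‖x‖) ^ K * ‖iteratedFDeriv ℝ m
            (fun z : EuclideanSpace ℝ (Fin N) =>
              ∫ y : EuclideanSpace ℝ (Fin N), Ψ k y * Φ j (z - y)) x‖ ≤ Q := by
    intro x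
    rw [aux_iter_conv]
    refine (aux_point (Φ j) (Ψ k) m P K (A * a ^ (N + (P + m))) a ha0.le (hA j) hHi ?_ x).trans ?_
    · rcases hPk with h | h
      · exact Or.inl h
      · exact Or.inr (aux_moment_scale (Ψ k) ψ₁ _ _ (hΨ k h) (by positivity) hψm)
    · exact mul_le_mul_of_nonneg_left hHb (by positivity)
  obtain ⟨hJ, hJe⟩ := aux_J_scale N a ha0
  have hTb : ∀ x : EuclideanSpace ℝ (Fin N), (2 : ℝ) ^ (-l) ≤ ‖x‖ →
      1 ≤ T * (1 + a * ‖x‖) ^ ⌈M⌉₊ := by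
    intro x hx
    have h1 : (1:ℝ) ≤ 1 + a * ‖x‖ := by
      have : 0 ≤ a * ‖x‖ := by positivity
      linarith
    have h2 : (2:ℝ) ^ ((j:ℝ) - (l:ℝ)) ≤ 1 + a * ‖x‖ := by
      have : (2:ℝ) ^ ((j:ℝ) - (l:ℝ)) = a * (2:ℝ) ^ (-l) := by
        rw [sub_eq_add_neg, Real.rpow_add (by norm_num), Real.rpow_natCast, ← Int.cast_neg,
          Real.rpow_intCast]
      rw [this]
      have := mul_le_mul_of_nonneg_left hx ha0.le
      linarith
    have h3 : (2:ℝ) ^ (M * ((j:ℝ) - (l:ℝ))) ≤ (1 + a * ‖x‖) ^ ⌈M⌉₊ := by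
      rw [mul_comm, Real.rpow_mul (by norm_num), ← Real.rpow_natCast]
      exact (Real.rpow_le_rpow (by positivity) h2 hM.le).trans
        (Real.rpow_le_rpow_of_exponent_le h1 (Nat.le_ceil M))
    rw [hT, Real.rpow_neg (by norm_num)]
    rw [← div_eq_inv_mul, le_div_iff₀ (by positivity), one_mul]
    exact h3
  have hmeas : MeasurableSet {x : EuclideanSpace ℝ (Fin N) | (2 : ℝ) ^ (-l) ≤ ‖x‖} :=
    measurableSet_le measurable_const measurable_norm
  have hG : Integrable (fun x : EuclideanSpace ℝ (Fin N) =>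
      Q * T * ((1 + a * ‖x‖) ^ (N + 1))⁻¹) := hJ.const_mul _
  calc _ ≤ ∫ x in {x : EuclideanSpace ℝ (Fin N) | (2 : ℝ) ^ (-l) ≤ ‖x‖},
        Q * T * ((1 + a * ‖x‖) ^ (N + 1))⁻¹ := by
        refine integral_mono_of_nonneg (Filter.Eventually.of_forall fun x => norm_nonneg _)
          hG.integrableOn ?_
        filter_upwards [ae_restrict_mem hmeas] with x hx
        have h1 := hTb x hx
        have h2 := hpt x
        have h3 : (0:ℝ) < 1 + a * ‖x‖ := by positivity
        rw [← div_eq_mul_inv, le_div_iff₀ (by positivity)]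
        set D := ‖iteratedFDeriv ℝ m
            (fun z : EuclideanSpace ℝ (Fin N) =>
              ∫ y : EuclideanSpace ℝ (Fin N), Ψ k y * Φ j (z - y)) x‖
        have hD : 0 ≤ D := norm_nonneg _
        calc D * (1 + a * ‖x‖) ^ (N + 1) = 1 * (D * (1 + a * ‖x‖) ^ (N + 1)) := by ring
          _ ≤ (T * (1 + a * ‖x‖) ^ ⌈M⌉₊) * (D * (1 + a * ‖x‖) ^ (N + 1)) := by gcongr
          _ = T * ((1 + a * ‖x‖) ^ K * D) := by rw [hK, pow_add]; ring
          _ ≤ T * Q := by gcongr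
          _ = Q * T := mul_comm _ _
    _ ≤ ∫ x : EuclideanSpace ℝ (Fin N), Q * T * ((1 + a * ‖x‖) ^ (N + 1))⁻¹ :=
        setIntegral_le_integral hG (Filter.Eventually.of_forall fun x => by
          have : (0:ℝ) < 1 + a * ‖x‖ := by positivity
          simp only [Pi.zero_apply]
          positivity)
    _ = (A * B * (I * I)) * (a ^ (m + P) * (b ^ P)⁻¹) * T := by
        rw [integral_const_mul, hJe, ← hIdef, hQ, pow_add a N, pow_add a P, pow_add a m]
        field_simp
    _ ≤ _ := by gcongr; linarith

lemma aux_half (N : ℕ) (M : ℝ) (hM : 0 < M) (m : ℕ)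
    (Φ Ψ : ℕ → SchwartzMap (EuclideanSpace ℝ (Fin N)) ℝ)
    (φ₁ ψ₁ : SchwartzMap (EuclideanSpace ℝ (Fin N)) ℝ)
    (hΦ : ∀ j, 1 ≤ j → ∀ x,
      Φ j x = (2 : ℝ) ^ (N * (j - 1)) * φ₁ ((2 : ℝ) ^ (j - 1) • x))
    (hΨ : ∀ j, 1 ≤ j → ∀ x,
      Ψ j x = (2 : ℝ) ^ (N * (j - 1)) * ψ₁ ((2 : ℝ) ^ (j - 1) • x))
    (hψm : ∀ α : Fin N → ℕ,
      (∫ x : EuclideanSpace ℝ (Fin N), (∏ i, x i ^ α i) * ψ₁ x) = 0) :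
    ∃ C > 0, ∀ (j k : ℕ) (l : ℤ), j ≤ k →
      (∫ x in {x : EuclideanSpace ℝ (Fin N) | (2 : ℝ) ^ (-l) ≤ ‖x‖},
          ‖iteratedFDeriv ℝ m
            (fun z : EuclideanSpace ℝ (Fin N) =>
              ∫ y : EuclideanSpace ℝ (Fin N), Ψ k y * Φ j (z - y)) x‖)
        ≤ C * (2 : ℝ) ^ ((j : ℝ) * (m : ℝ)) *
            (2 : ℝ) ^ (-(M * (((k:ℝ) - (j : ℝ)) + (k : ℝ) - (l : ℝ)))) := by
  obtain ⟨C0, hC0, h0⟩ := aux_claim N M hM m 0 Φ Ψ φ₁ ψ₁ hΦ hΨ hψm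
  obtain ⟨C1, hC1, h1⟩ := aux_claim N M hM m ⌈2 * M⌉₊ Φ Ψ φ₁ ψ₁ hΦ hΨ hψm
  refine ⟨C0 + C1, by positivity, fun j k l hjk => ?_⟩
  have hc : (2 * M : ℝ) ≤ (⌈2 * M⌉₊ : ℕ) := Nat.le_ceil _
  set P := ⌈2 * M⌉₊
  have hjk' : (j:ℝ) ≤ k := by exact_mod_cast hjk
  have key : ∀ (C : ℝ) (P' : ℕ), 0 < C → C ≤ C0 + C1 →
      (2 * M * ((k:ℝ) - j) ≤ P' * ((k:ℝ) - j)) →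
      C * (((2:ℝ) ^ j) ^ (m + P') * (((2:ℝ) ^ k) ^ P')⁻¹) *
          (2:ℝ) ^ (-(M * ((j:ℝ) - (l:ℝ)))) ≤ (C0 + C1) * (2 : ℝ) ^ ((j : ℝ) * (m : ℝ)) *
            (2 : ℝ) ^ (-(M * (((k:ℝ) - (j : ℝ)) + (k : ℝ) - (l : ℝ)))) := by
    intro C P' hC hCC hP
    have e1 : ((2:ℝ) ^ j) ^ (m + P') * (((2:ℝ) ^ k) ^ P')⁻¹ =
        (2:ℝ) ^ ((j:ℝ) * (m + P') - (k:ℝ) * P') := by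
      rw [Real.rpow_sub (by norm_num), ← pow_mul, ← pow_mul, div_eq_mul_inv]
      congr 1
      · rw [← Real.rpow_natCast]; push_cast; rfl
      · rw [← Real.rpow_natCast]; push_cast; rfl
    rw [e1, mul_assoc, mul_assoc, ← Real.rpow_add (by norm_num), ← Real.rpow_add (by norm_num)]
    refine mul_le_mul hCC (Real.rpow_le_rpow_of_exponent_le (by norm_num) ?_)
      (by positivity) (by positivity)
    nlinarith
  rcases Nat.eq_zero_or_pos k with hk | hk
  · have hj : j = 0 := by omega
    refine (h0 j k l hjk (Or.inl rfl)).trans (key C0 0 hC0 (by linarith) ?_)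
    simp [hk, hj]
  · refine (h1 j k l hjk (Or.inr hk)).trans (key C1 P hC1 (by linarith) ?_)
    exact mul_le_mul_of_nonneg_right hc (by linarith)

/-- Almost-orthogonality estimate for generalized dyadic resolutions: with
`Φ_j(x) = 2^{N(j-1)} φ₁(2^{j-1}x)` and `Ψ_k(x) = 2^{N(k-1)} ψ₁(2^{k-1}x)` for `j,k ≥ 1`
(`Φ_0, Ψ_0` arbitrary Schwartz), where `φ₁, ψ₁` have all vanishing moments, for any
`M > 0` and derivative order `m` there is `C > 0` such that for all `j, k ∈ ℕ`, `l ∈ ℤ`,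
`∫_{|x| ≥ 2^{-l}} ‖D^m(Φ_j ∗ Ψ_k)(x)‖ dx ≤ C 2^{min(j,k)m − M(|j−k| + max(j,k) − l)}`. -/
theorem stmt11 (N : ℕ) (M : ℝ) (hM : 0 < M) (m : ℕ)
    (Φ Ψ : ℕ → SchwartzMap (EuclideanSpace ℝ (Fin N)) ℝ)
    (φ₁ ψ₁ : SchwartzMap (EuclideanSpace ℝ (Fin N)) ℝ)
    (hΦ : ∀ j, 1 ≤ j → ∀ x,
      Φ j x = (2 : ℝ) ^ (N * (j - 1)) * φ₁ ((2 : ℝ) ^ (j - 1) • x))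
    (hΨ : ∀ j, 1 ≤ j → ∀ x,
      Ψ j x = (2 : ℝ) ^ (N * (j - 1)) * ψ₁ ((2 : ℝ) ^ (j - 1) • x))
    (hφm : ∀ α : Fin N → ℕ,
      (∫ x : EuclideanSpace ℝ (Fin N), (∏ i, x i ^ α i) * φ₁ x) = 0)
    (hψm : ∀ α : Fin N → ℕ,
      (∫ x : EuclideanSpace ℝ (Fin N), (∏ i, x i ^ α i) * ψ₁ x) = 0) :
    ∃ C > 0, ∀ (j k : ℕ) (l : ℤ),
      (∫ x in {x : EuclideanSpace ℝ (Fin N) | (2 : ℝ) ^ (-l) ≤ ‖x‖},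
          ‖iteratedFDeriv ℝ m
            (fun z : EuclideanSpace ℝ (Fin N) =>
              ∫ y : EuclideanSpace ℝ (Fin N), Φ j y * Ψ k (z - y)) x‖)
        ≤ C * (2 : ℝ) ^ (((min j k : ℕ) : ℝ) * (m : ℝ)) *
            (2 : ℝ) ^ (-(M * (|(j : ℝ) - (k : ℝ)| + ((max j k : ℕ) : ℝ) - (l : ℝ)))) := by
  obtain ⟨C1, hC1, h1⟩ := aux_half N M hM m Φ Ψ φ₁ ψ₁ hΦ hΨ hψm
  obtain ⟨C2, hC2, h2⟩ := aux_half N M hM m Ψ Φ ψ₁ φ₁ hΨ hΦ hφm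
  refine ⟨C1 + C2, by positivity, fun j k l => ?_⟩
  rcases le_total j k with hjk | hjk
  · have hjk' : (j:ℝ) ≤ k := by exact_mod_cast hjk
    have e : (fun z : EuclideanSpace ℝ (Fin N) =>
        ∫ y : EuclideanSpace ℝ (Fin N), Φ j y * Ψ k (z - y)) =
        fun z => ∫ y : EuclideanSpace ℝ (Fin N), Ψ k y * Φ j (z - y) := by
      ext z
      rw [← integral_sub_left_eq_self _ volume z]
      congr 1
      ext y
      rw [sub_sub_cancel, mul_comm]
    rw [e, min_eq_left hjk, max_eq_right hjk, abs_sub_comm, abs_of_nonneg (by linarith)]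
    refine (h1 j k l hjk).trans ?_
    gcongr
    linarith
  · have hjk' : (k:ℝ) ≤ j := by exact_mod_cast hjk
    rw [min_eq_right hjk, max_eq_left hjk, abs_of_nonneg (by linarith)]
    refine (h2 k j l hjk).trans ?_
    gcongr
    linarith
end

section
/- There exists a Schwartz function φ_0 on ℝ^N with ∫ φ_0 = 1, ∫ x^α φ_0(x) dx = 0 for all multi-indices α ≠ 0, and supp φ_0 ⊆ {(x', x_N) : x_N < −|x'|} ∩ {x_N < −1}. -/
open MeasureTheory

/-- log-normal type functions -/
noncomputable def lnf (P : Polynomial ℂ) (c : ℂ) (x : ℝ) : ℂ :=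
  if 0 < x then P.eval (Real.log x : ℂ) * Complex.exp (-(Real.log x : ℂ) ^ 2 + c * (Real.log x : ℂ))
  else 0

lemma gauss_poly_bdd (P : Polynomial ℂ) (b : ℝ) :
    ∃ C : ℝ, ∀ u : ℝ, ‖P.eval (u : ℂ)‖ * Real.exp (-u ^ 2 + b * u) ≤ C := by
  induction P using Polynomial.induction_on' with
  | add p q hp hq =>
    obtain ⟨C, hC⟩ := hp
    obtain ⟨D, hD⟩ := hq
    refine ⟨C + D, fun u => ?_⟩
    have h1 := hC u
    have h2 := hD u
    have h3 : ‖(p + q).eval (u : ℂ)‖ ≤ ‖p.eval (u : ℂ)‖ + ‖q.eval (u : ℂ)‖ := by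
      rw [Polynomial.eval_add]; exact norm_add_le _ _
    have := mul_le_mul_of_nonneg_right h3 (Real.exp_pos (-u ^ 2 + b * u)).le
    linarith
  | monomial n a =>
    refine ⟨‖a‖ * (n.factorial * Real.exp ((|b| + 1) ^ 2)), fun u => ?_⟩
    rw [Polynomial.eval_monomial, norm_mul, norm_pow, Complex.norm_real, Real.norm_eq_abs, mul_assoc]
    refine mul_le_mul_of_nonneg_left ?_ (norm_nonneg a)
    have h1 : |u| ^ n ≤ n.factorial * Real.exp |u| := by
      have := Real.pow_div_factorial_le_exp |u| (abs_nonneg u) n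
      rw [div_le_iff₀ (by positivity)] at this
      linarith
    calc |u| ^ n * Real.exp (-u ^ 2 + b * u)
        ≤ (n.factorial * Real.exp |u|) * Real.exp (-u ^ 2 + b * u) := by gcongr
      _ = n.factorial * Real.exp (|u| + (-u ^ 2 + b * u)) := by rw [mul_assoc, ← Real.exp_add]
      _ ≤ _ := by
        gcongr
        have h2 : b * u ≤ |b| * |u| := by rw [← abs_mul]; exact le_abs_self _
        have h3 : u ^ 2 = |u| ^ 2 := (sq_abs u).symm
        nlinarith [sq_nonneg (|u| - (|b| + 1)), abs_nonneg u, abs_nonneg b]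

lemma lnf_bdd (P : Polynomial ℂ) (c : ℂ) : ∃ C : ℝ, ∀ x : ℝ, ‖lnf P c x‖ ≤ C := by
  obtain ⟨C, hC⟩ := gauss_poly_bdd P c.re
  refine ⟨C, fun x => ?_⟩
  unfold lnf
  split_ifs with h
  · rw [norm_mul, Complex.norm_exp]
    convert hC (Real.log x) using 3
    simp [← Complex.ofReal_pow]
  · rw [norm_zero]
    exact le_trans (by positivity) (hC 0)

lemma lnf_pow_mul (P : Polynomial ℂ) (c : ℂ) (k : ℕ) (x : ℝ) :
    (x : ℂ) ^ k * lnf P c x = lnf P (c + k) x := by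
  unfold lnf
  split_ifs with h
  · have : (x : ℂ) = Complex.exp (Real.log x : ℂ) := by
      rw [← Complex.ofReal_exp, Real.exp_log h]
    nth_rw 1 [this]
    rw [← Complex.exp_nat_mul, mul_left_comm, ← Complex.exp_add]
    congr 2
    ring
  · simp

lemma lnf_hasDerivAt (P : Polynomial ℂ) (c : ℂ) (x : ℝ) :
    HasDerivAt (lnf P c)
      (lnf (Polynomial.derivative P + (Polynomial.C c - 2 * Polynomial.X) * P) (c - 1) x) x := by
  rcases lt_trichotomy x 0 with h | h | h
  · have e : lnf P c =ᶠ[nhds x] fun _ => 0 := by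
      filter_upwards [gt_mem_nhds h] with y hy
      simp [lnf, not_lt.2 hy.le]
    have : lnf (Polynomial.derivative P + (Polynomial.C c - 2 * Polynomial.X) * P) (c - 1) x = 0 := by
      simp [lnf, not_lt.2 h.le]
    rw [this]
    exact (hasDerivAt_const x (0 : ℂ)).congr_of_eventuallyEq e
  · subst h
    have : lnf (Polynomial.derivative P + (Polynomial.C c - 2 * Polynomial.X) * P) (c - 1) 0 = 0 := by
      simp [lnf]
    rw [this]
    obtain ⟨C, hC⟩ := lnf_bdd P (c - 2)
    rw [hasDerivAt_iff_isLittleO_nhds_zero]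
    have h0 : lnf P c 0 = 0 := by simp [lnf]
    simp only [zero_add, h0, sub_zero, smul_zero]
    have hO : (fun h : ℝ => lnf P c h) =O[nhds 0] fun h : ℝ => h ^ 2 := by
      refine Asymptotics.IsBigO.of_bound C (Filter.Eventually.of_forall fun x => ?_)
      have := lnf_pow_mul P (c - 2) 2 x
      rw [show c - 2 + ((2 : ℕ) : ℂ) = c by push_cast; ring] at this
      rw [← this, norm_mul, norm_pow, norm_pow, Complex.norm_real, mul_comm]
      gcongr
      exact hC x
    refine hO.trans_isLittleO ?_
    simpa using Asymptotics.isLittleO_pow_id (𝕜 := ℝ) (n := 2) (by norm_num)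
  · have e : lnf P c =ᶠ[nhds x] fun x => P.eval (Real.log x : ℂ) *
        Complex.exp (-(Real.log x : ℂ) ^ 2 + c * (Real.log x : ℂ)) := by
      filter_upwards [lt_mem_nhds h] with y hy
      simp [lnf, hy]
    refine HasDerivAt.congr_of_eventuallyEq ?_ e
    have hl : HasDerivAt (fun x : ℝ => (Real.log x : ℂ)) ((x⁻¹ : ℝ) : ℂ) x :=
      (Real.hasDerivAt_log h.ne').ofReal_comp
    have hP := (P.hasDerivAt (Real.log x : ℂ)).comp x hl
    have hE := ((hl.pow 2).neg.add (hl.const_mul c)).cexp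
    have := hP.mul hE
    refine this.congr_deriv ?_
    have hx : ((x⁻¹ : ℝ) : ℂ) = Complex.exp (-(Real.log x : ℂ)) := by
      rw [← Complex.ofReal_neg, ← Complex.ofReal_exp, Real.exp_neg, Real.exp_log h]
    have h2 : Complex.exp (-(Real.log x : ℂ) ^ 2 + (c - 1) * (Real.log x : ℂ)) =
        ((x⁻¹ : ℝ) : ℂ) * Complex.exp (-(Real.log x : ℂ) ^ 2 + c * (Real.log x : ℂ)) := by
      rw [hx, ← Complex.exp_add]; congr 1; ring
    simp only [lnf, h, if_true, h2, Polynomial.eval_add, Polynomial.eval_mul, Polynomial.eval_sub,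
      Polynomial.eval_C, Polynomial.eval_X, Polynomial.eval_ofNat, Pi.add_apply, Pi.neg_apply, Pi.pow_apply, Function.comp_apply]
    push_cast
    ring

lemma lnf_iteratedDeriv (k : ℕ) (P : Polynomial ℂ) (c : ℂ) :
    ∃ Q : Polynomial ℂ, iteratedDeriv k (lnf P c) = lnf Q (c - k) := by
  induction k with
  | zero => exact ⟨P, by simp⟩
  | succ k ih =>
    obtain ⟨Q, hQ⟩ := ih
    refine ⟨Polynomial.derivative Q + (Polynomial.C (c - k) - 2 * Polynomial.X) * Q, ?_⟩
    rw [iteratedDeriv_succ, hQ]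
    funext x
    rw [(lnf_hasDerivAt Q (c - k) x).deriv]
    push_cast
    congr 1
    ring

noncomputable def lnS (P : Polynomial ℂ) (c : ℂ) : SchwartzMap ℝ ℂ where
  toFun := lnf P c
  smooth' := by
    apply contDiff_of_differentiable_iteratedDeriv
    intro m _
    obtain ⟨Q, hQ⟩ := lnf_iteratedDeriv m P c
    rw [hQ]
    exact fun x => (lnf_hasDerivAt Q _ x).differentiableAt
  decay' := by
    intro k n
    obtain ⟨Q, hQ⟩ := lnf_iteratedDeriv n P c
    obtain ⟨C, hC⟩ := lnf_bdd Q (c - n + k)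
    refine ⟨C, fun x => ?_⟩
    rw [norm_iteratedFDeriv_eq_norm_iteratedDeriv, hQ]
    have := hC x
    rwa [← lnf_pow_mul, norm_mul, norm_pow, Complex.norm_real] at this

lemma lnf_moment (k : ℕ) : (∫ x : ℝ, lnf 1 (2 * Real.pi * Complex.I + k) x).im = 0 := by
  have h1 : (∫ x : ℝ, lnf 1 (2 * Real.pi * Complex.I + k) x) =
      ∫ u : ℝ, Complex.exp ((-1 : ℂ) * (u : ℂ) ^ 2 + (2 * Real.pi * Complex.I + k + 1) * u + 0) := by
    have hs : (∫ x : ℝ, lnf 1 (2 * Real.pi * Complex.I + k) x) =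
        ∫ x in Set.range Real.exp, lnf 1 (2 * Real.pi * Complex.I + k) x := by
      rw [Real.range_exp, setIntegral_eq_integral_of_forall_compl_eq_zero]
      intro x hx
      simp only [Set.mem_Ioi] at hx
      simp [lnf, hx]
    rw [hs, ← Set.image_univ, integral_image_eq_integral_abs_deriv_smul MeasurableSet.univ
      (fun x _ => (Real.hasDerivAt_exp x).hasDerivWithinAt) Real.exp_injective.injOn]
    rw [setIntegral_univ]
    congr 1
    funext u
    simp only [lnf, Real.exp_pos, if_true, Real.log_exp, Polynomial.eval_one, one_mul,
      abs_of_pos, Complex.real_smul, Complex.ofReal_exp]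
    rw [← Complex.exp_add]
    congr 1
    ring
  rw [h1, integral_cexp_quadratic (by simp)]
  have h2 : ((Real.pi : ℂ) / -(-1)) ^ (1 / 2 : ℂ) = ((Real.pi ^ (1 / 2 : ℝ) : ℝ) : ℂ) := by
    rw [Complex.ofReal_cpow Real.pi_pos.le]; simp
  have h3 : (0 - (2 * Real.pi * Complex.I + k + 1) ^ 2 / (4 * (-1)) : ℂ) =
      (((-4 * Real.pi ^ 2 + (k + 1) ^ 2) / 4 : ℝ) : ℂ) + ((k + 1 : ℕ) : ℂ) * (Real.pi * Complex.I) := by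
    push_cast
    linear_combination (Real.pi ^ 2 : ℂ) * Complex.I_sq
  rw [h2, h3, Complex.exp_add, Complex.exp_nat_mul, Complex.exp_pi_mul_I, ← Complex.ofReal_exp]
  have h4 : ((-1 : ℂ)) ^ (k + 1) = (((-1 : ℝ) ^ (k + 1) : ℝ) : ℂ) := by push_cast; rfl
  rw [h4, ← Complex.ofReal_mul, ← Complex.ofReal_mul, Complex.ofReal_im]

/-- real-valued Schwartz function on the positive half-line, all moments zero -/
lemma exists_h : ∃ h : SchwartzMap ℝ ℝ, (∀ x ≤ 0, h x = 0) ∧ (∀ k : ℕ, ∫ x, x ^ k * h x = 0) ∧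
    ∀ x, 1 < x → x < Real.exp (1 / 2) → 0 < h x := by
  refine ⟨(lnS 1 (2 * Real.pi * Complex.I)).postcompCLM Complex.imCLM, ?_, ?_, ?_⟩
  · intro x hx
    rw [SchwartzMap.postcompCLM_apply]
    show (lnf _ _ x).im = 0
    simp [lnf, not_lt.2 hx]
  · intro k
    have : ∀ x : ℝ, x ^ k * (lnS 1 (2 * Real.pi * Complex.I)).postcompCLM Complex.imCLM x =
        RCLike.im (lnS 1 (2 * Real.pi * Complex.I + k) x) := by
      intro x
      rw [SchwartzMap.postcompCLM_apply]
      show x ^ k * (lnf _ _ x).im = (lnf _ _ x).im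
      rw [← lnf_pow_mul, ← Complex.ofReal_pow, Complex.im_ofReal_mul]
    simp_rw [this]
    rw [integral_im (SchwartzMap.integrable _)]
    exact lnf_moment k
  · intro x h1 h2
    rw [SchwartzMap.postcompCLM_apply]
    show 0 < (lnf _ _ x).im
    have hx : 0 < x := by linarith
    have hl : 0 < Real.log x := Real.log_pos h1
    have hl2 : Real.log x < 1 / 2 := by rwa [Real.log_lt_iff_lt_exp hx]
    simp only [lnf, hx, if_true, Polynomial.eval_one, one_mul, Complex.exp_im]
    apply mul_pos (Real.exp_pos _)
    have : (-(Real.log x : ℂ) ^ 2 + 2 * Real.pi * Complex.I * (Real.log x : ℂ)).im =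
        2 * Real.pi * Real.log x := by
      simp [← Complex.ofReal_pow]
    rw [this]
    apply Real.sin_pos_of_pos_of_lt_pi
    · have := Real.pi_pos; positivity
    · nlinarith [Real.pi_pos]

lemma integrable_temp_mul {D : Type*} [NormedAddCommGroup D] [NormedSpace ℝ D]
    [MeasurableSpace D] [BorelSpace D] [SecondCountableTopology D] {μ : Measure D}
    [μ.HasTemperateGrowth] {p : D → ℝ}
    (hp : p.HasTemperateGrowth) (f : SchwartzMap D ℝ) : Integrable (fun x => p x * f x) μ := by
  have := (SchwartzMap.smulLeftCLM ℝ p f).integrable (μ := μ)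
  rwa [SchwartzMap.smulLeftCLM_apply hp] at this

noncomputable def kap (t : ℝ) : ℝ := Real.smoothTransition (2 * t - 1) * t⁻¹

lemma kap_eq {t : ℝ} (ht : 1 ≤ t) : kap t = t⁻¹ := by
  rw [kap, Real.smoothTransition.one_of_one_le (by linarith), one_mul]

lemma kap_zero {t : ℝ} (ht : t ≤ 1 / 2) : kap t = 0 := by
  rw [kap, Real.smoothTransition.zero_of_nonpos (by linarith), zero_mul]

lemma kap_contDiff : ContDiff ℝ (⊤ : ℕ∞) kap := by
  rw [contDiff_iff_contDiffAt]
  intro t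
  by_cases ht : t < 1 / 2
  · have : kap =ᶠ[nhds t] fun _ => 0 := by
      filter_upwards [gt_mem_nhds ht] with y hy
      exact kap_zero hy.le
    exact contDiffAt_const.congr_of_eventuallyEq this
  · have h0 : t ≠ 0 := by intro h; subst h; norm_num at ht
    unfold kap
    refine ContDiffAt.mul ?_ (contDiffAt_inv ℝ h0)
    exact (Real.smoothTransition.contDiff.comp (by fun_prop : ContDiff ℝ _ fun t : ℝ => 2 * t - 1)).contDiffAt

lemma kap_temp : kap.HasTemperateGrowth := by
  refine ⟨kap_contDiff, fun n => ?_⟩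
  have hc : Continuous (fun t => ‖iteratedFDeriv ℝ n kap t‖) :=
    (kap_contDiff.continuous_iteratedFDeriv (by exact_mod_cast le_top)).norm
  obtain ⟨C, hC⟩ := (isCompact_Icc (a := (0 : ℝ)) (b := 2)).bddAbove_image hc.continuousOn
  refine ⟨0, max C n.factorial, fun t => ?_⟩
  rw [pow_zero, mul_one]
  by_cases h0 : t < 0
  · have : kap =ᶠ[nhds t] fun _ => 0 := by
      filter_upwards [gt_mem_nhds h0] with y hy
      exact kap_zero (by linarith)
    rw [(this.iteratedFDeriv ℝ n).eq_of_nhds]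
    have : iteratedFDeriv ℝ n (fun _ : ℝ => (0 : ℝ)) t = 0 := by
      simp
    rw [this, norm_zero]
    exact le_max_of_le_right (by positivity)
  by_cases h2 : t ≤ 2
  · exact le_max_of_le_left (hC ⟨t, ⟨not_lt.1 h0, h2⟩, rfl⟩)
  · push Not at h2
    have : kap =ᶠ[nhds t] fun t => t⁻¹ := by
      filter_upwards [lt_mem_nhds h2] with y hy
      exact kap_eq (by linarith)
    refine le_max_of_le_right ?_
    rw [norm_iteratedFDeriv_eq_norm_iteratedDeriv, this.iteratedDeriv_eq, iteratedDeriv_eq_iterate]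
    have h3 := iter_deriv_inv (𝕜 := ℝ) n t
    change ‖deriv^[n] Inv.inv t‖ ≤ _
    rw [h3, norm_mul, norm_mul, norm_pow, norm_neg, norm_one, one_pow, one_mul]
    have h4 : ‖t ^ (-1 - n : ℤ)‖ ≤ 1 := by
      rw [norm_zpow, Real.norm_eq_abs, abs_of_pos (by linarith)]
      exact zpow_le_one_of_nonpos₀ (by linarith) (by omega)
    rw [Real.norm_natCast]
    exact mul_le_of_le_one_right (by positivity) h4

lemma exists_h2 : ∃ h : SchwartzMap ℝ ℝ, (∀ x ≤ 2, h x = 0) ∧ (∀ k : ℕ, ∫ x, x ^ k * h x = 0) ∧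
    ∀ x, 3 < x → x < 2 + Real.exp (1 / 2) → 0 < h x := by
  obtain ⟨h, h1, h2, h3⟩ := exists_h
  refine ⟨SchwartzMap.compSubConstCLM ℝ (2 : ℝ) h, ?_, ?_, ?_⟩
  · intro x hx
    rw [SchwartzMap.compSubConstCLM_apply]
    exact h1 _ (by linarith)
  · intro k
    simp_rw [SchwartzMap.compSubConstCLM_apply]
    have : ∫ x : ℝ, x ^ k * h (x - 2) = ∫ x : ℝ, (x + 2) ^ k * h x := by
      rw [← integral_sub_right_eq_self (fun x : ℝ => (x + 2) ^ k * h x) 2]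
      simp
    rw [this]
    simp_rw [add_pow, Finset.sum_mul]
    rw [integral_finsetSum]
    · apply Finset.sum_eq_zero
      intro i _
      have : ∀ x : ℝ, x ^ i * 2 ^ (k - i) * (k.choose i : ℝ) * h x =
          (2 ^ (k - i) * (k.choose i : ℝ)) * (x ^ i * h x) := by intro x; ring
      simp_rw [this]
      rw [integral_const_mul, h2, mul_zero]
    · intro i _
      exact integrable_temp_mul (by fun_prop) h
  · intro x hx hx2
    rw [SchwartzMap.compSubConstCLM_apply]
    exact h3 _ (by linarith) (by linarith)

lemma exists_k (h : SchwartzMap ℝ ℝ) (h0 : ∀ x ≤ 2, h x = 0)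
    (hpos : ∀ x, 3 < x → x < 2 + Real.exp (1 / 2) → 0 < h x) :
    ∃ k : ℕ, ∫ x, kap x ^ k * h x ≠ 0 := by
  by_contra! hk
  have kt := kap_temp
  set a : ℝ := (2 + Real.exp (1 / 2))⁻¹ with ha
  have he : 1 < Real.exp (1 / 2) := Real.one_lt_exp_iff.2 (by norm_num)
  let q : ℝ → ℝ := fun t => max 0 ((1 / 3 - t) * (t - a))
  have hqc : Continuous q := by fun_prop
  have hpoly : ∀ p : Polynomial ℝ, Integrable (fun x => p.eval (kap x) * h x) ∧
      ∫ x, p.eval (kap x) * h x = 0 := by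
    intro p
    simp_rw [Polynomial.eval_eq_sum_range, Finset.sum_mul]
    have hi : ∀ i, Integrable (fun x => p.coeff i * kap x ^ i * h x) := fun i =>
      integrable_temp_mul (by fun_prop) h
    refine ⟨integrable_finsetSum _ fun i _ => hi i, ?_⟩
    rw [integral_finsetSum _ fun i _ => hi i]
    apply Finset.sum_eq_zero
    intro i _
    simp_rw [mul_assoc]
    rw [integral_const_mul, hk, mul_zero]
  have hkr : ∀ x, 2 < x → kap x ∈ Set.Icc (0 : ℝ) 1 := by
    intro x hx
    rw [kap_eq (by linarith)]
    exact ⟨by positivity, inv_le_one_of_one_le₀ (by linarith)⟩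
  have hdiff : ∀ ε > 0, ∃ p : Polynomial ℝ, ∀ x, ‖q (kap x) * h x - p.eval (kap x) * h x‖ ≤ ε * ‖h x‖ := by
    intro ε hε
    obtain ⟨p, hp⟩ := exists_polynomial_near_of_continuousOn 0 1 q hqc.continuousOn ε hε
    refine ⟨p, fun x => ?_⟩
    rw [← sub_mul, norm_mul]
    by_cases hx : x ≤ 2
    · simp [h0 x hx]
    · gcongr
      rw [norm_sub_rev]
      exact (hp _ (hkr x (not_le.1 hx))).le
  have hqm : AEStronglyMeasurable (fun x => q (kap x) * h x) volume :=
    ((hqc.comp kap_contDiff.continuous).mul h.continuous).aestronglyMeasurable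
  have hqi : Integrable (fun x => q (kap x) * h x) := by
    obtain ⟨p, hp⟩ := hdiff 1 one_pos
    have h1 : Integrable (fun x => q (kap x) * h x - p.eval (kap x) * h x) := by
      refine Integrable.mono' (h.integrable.norm.const_mul 1) (hqm.sub (hpoly p).1.aestronglyMeasurable) ?_
      exact Filter.Eventually.of_forall hp
    have := h1.add (hpoly p).1
    refine this.congr (Filter.Eventually.of_forall fun x => ?_)
    simp
  have hz : ∀ ε > 0, ‖∫ x, q (kap x) * h x‖ ≤ ε * ∫ x, ‖h x‖ := by
    intro ε hε
    obtain ⟨p, hp⟩ := hdiff ε hε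
    have : ∫ x, q (kap x) * h x = ∫ x, (q (kap x) * h x - p.eval (kap x) * h x) := by
      rw [integral_sub hqi (hpoly p).1, (hpoly p).2, sub_zero]
    rw [this, ← integral_const_mul]
    exact norm_integral_le_of_norm_le (h.integrable.norm.const_mul ε) (Filter.Eventually.of_forall hp)
  have hkey : ∀ x, 2 < x → (¬ (3 < x ∧ x < 2 + Real.exp (1 / 2)) → q (kap x) = 0) ∧
      ((3 < x ∧ x < 2 + Real.exp (1 / 2)) → 0 < q (kap x)) := by
    intro x hx
    have hx0 : 0 < x := by linarith
    have e1 : 1 / 3 - x⁻¹ = (x - 3) / (3 * x) := by field_simp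
    have e2 : x⁻¹ - a = (2 + Real.exp (1 / 2) - x) / (x * (2 + Real.exp (1 / 2))) := by
      rw [ha]; field_simp
    have e : q (kap x) = max 0 ((x - 3) / (3 * x) * ((2 + Real.exp (1 / 2) - x) / (x * (2 + Real.exp (1 / 2))))) := by
      simp only [q]
      rw [kap_eq (by linarith), e1, e2]
    rw [e]
    constructor
    · intro hn
      apply max_eq_left
      rw [div_mul_div_comm]
      apply div_nonpos_of_nonpos_of_nonneg _ (by positivity)
      by_cases h3 : 3 < x
      · have : 2 + Real.exp (1 / 2) ≤ x := by
          by_contra hh; exact hn ⟨h3, not_le.1 hh⟩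
        nlinarith
      · push Not at h3
        nlinarith
    · rintro ⟨h3, h4⟩
      apply lt_max_of_lt_right
      have : 0 < x - 3 := by linarith
      have : 0 < 2 + Real.exp (1 / 2) - x := by linarith
      positivity
  have hnn : 0 ≤ fun x => q (kap x) * h x := by
    intro x
    show 0 ≤ q (kap x) * h x
    by_cases hx : x ≤ 2
    · simp [h0 x hx]
    · push Not at hx
      by_cases hx2 : 3 < x ∧ x < 2 + Real.exp (1 / 2)
      · exact mul_nonneg ((hkey x hx).2 hx2).le (hpos x hx2.1 hx2.2).le
      · rw [(hkey x hx).1 hx2, zero_mul]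
  have hp : 0 < ∫ x, q (kap x) * h x := by
    rw [integral_pos_iff_support_of_nonneg hnn hqi]
    refine lt_of_lt_of_le ?_ (measure_mono (s := Set.Ioo 3 (2 + Real.exp (1 / 2))) ?_)
    · rw [Real.volume_Ioo, ENNReal.ofReal_pos]; linarith
    · intro x hx
      exact (mul_pos ((hkey x (by linarith [hx.1])).2 hx) (hpos x hx.1 hx.2)).ne'
  have hI : 0 ≤ ∫ x, ‖h x‖ := integral_nonneg fun x => norm_nonneg _
  have := hz ((∫ x, q (kap x) * h x) / (2 * ((∫ x, ‖h x‖) + 1))) (by positivity)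
  rw [Real.norm_eq_abs, abs_of_pos hp, div_mul_eq_mul_div, le_div_iff₀ (by positivity)] at this
  nlinarith

lemma pow_inv_aux {x : ℝ} (hx : x ≠ 0) (m k : ℕ) :
    x ^ m * x⁻¹ ^ k = x ^ (m - k) * x⁻¹ ^ (k - m) := by
  rcases le_total m k with hmk | hmk
  · obtain ⟨d, rfl⟩ := Nat.exists_eq_add_of_le hmk
    simp only [Nat.sub_eq_zero_of_le hmk, Nat.add_sub_cancel_left, pow_add, inv_pow]
    field_simp
  · obtain ⟨d, rfl⟩ := Nat.exists_eq_add_of_le hmk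
    simp only [Nat.sub_eq_zero_of_le hmk, Nat.add_sub_cancel_left, pow_add, inv_pow]
    field_simp

lemma exists_g : ∃ g : SchwartzMap ℝ ℝ, (∀ x ≤ 2, g x = 0) ∧ ∫ x, g x = 1 ∧
    ∀ k : ℕ, k ≠ 0 → ∫ x, x ^ k * g x = 0 := by
  obtain ⟨h, h0, hm, hpos⟩ := exists_h2
  have hex := exists_k h h0 hpos
  classical
  set k := Nat.find hex with hkdef
  have hk : ∫ x, kap x ^ k * h x ≠ 0 := Nat.find_spec hex
  have hmin : ∀ j < k, ∫ x, kap x ^ j * h x = 0 := fun j hj => not_not.1 (Nat.find_min hex hj)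
  have kt := kap_temp
  have hkt : (fun x => kap x ^ k).HasTemperateGrowth := by fun_prop
  set c := ∫ x, kap x ^ k * h x with hc
  have hg : ∀ x, (c⁻¹ • SchwartzMap.smulLeftCLM ℝ (fun x => kap x ^ k) h) x = c⁻¹ * (kap x ^ k * h x) := by
    intro x
    rw [smul_apply, SchwartzMap.smulLeftCLM_apply_apply hkt]
    rfl
  refine ⟨c⁻¹ • SchwartzMap.smulLeftCLM ℝ (fun x => kap x ^ k) h, ?_, ?_, ?_⟩
  · intro x hx
    rw [hg, h0 x hx]; simp
  · simp_rw [hg]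
    rw [integral_const_mul, ← hc, inv_mul_cancel₀ hk]
  · intro m hm0
    simp_rw [hg]
    have e : ∀ x, x ^ m * (c⁻¹ * (kap x ^ k * h x)) = c⁻¹ * (x ^ (m - k) * (kap x ^ (k - m) * h x)) := by
      intro x
      by_cases hx : x ≤ 2
      · simp [h0 x hx]
      · push Not at hx
        have hx0 : x ≠ 0 := by positivity
        rw [kap_eq (by linarith)]
        have := pow_inv_aux hx0 m k
        linear_combination (c⁻¹ * h x) * this
    simp_rw [e]
    rw [integral_const_mul]
    rcases lt_or_ge m k with hmk | hmk
    · simp only [Nat.sub_eq_zero_of_le hmk.le, pow_zero, one_mul]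
      rw [hmin _ (by omega), mul_zero]
    · simp only [Nat.sub_eq_zero_of_le hmk, pow_zero, one_mul]
      rw [hm, mul_zero]

lemma exists_schwartz {E : Type*} [NormedAddCommGroup E] [NormedSpace ℝ E]
    (G : SchwartzMap ℝ ℝ) (B : E × ℝ → ℝ) (hB : B.HasTemperateGrowth)
    (hs : ∀ x : E × ℝ, G x.2 * B x ≠ 0 → ‖x.1‖ ≤ |x.2|) :
    ∃ φ : SchwartzMap (E × ℝ) ℝ, ∀ x, φ x = G x.2 * B x := by
  have hG : ContDiff ℝ (⊤ : ℕ∞) (fun x : E × ℝ => G x.2) := (G.smooth ⊤).comp contDiff_snd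
  have hcl : tsupport (fun x : E × ℝ => G x.2 * B x) ⊆ {x | ‖x.1‖ ≤ |x.2|} :=
    closure_minimal hs (isClosed_le (by fun_prop) (by fun_prop))
  refine ⟨⟨fun x => G x.2 * B x, hG.mul hB.1, ?_⟩, fun x => rfl⟩
  intro k m
  obtain ⟨l, C, hC0, hC⟩ := hB.norm_iteratedFDeriv_le_uniform m
  set K : ℝ := 2 ^ (k + l) * ((Finset.Iic (k + l, m)).sup fun m => SchwartzMap.seminorm ℝ m.1 m.2) G
    with hK
  have hGK : ∀ i ≤ m, ∀ t : ℝ, (1 + ‖t‖) ^ (k + l) * ‖iteratedFDeriv ℝ i G t‖ ≤ K := fun i hi t =>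
    SchwartzMap.one_add_le_sup_seminorm_apply (𝕜 := ℝ) (m := (k + l, m)) le_rfl hi G t
  have hK0 : 0 ≤ K := le_trans (by positivity) (hGK 0 (Nat.zero_le _) 0)
  refine ⟨∑ i ∈ Finset.range (m + 1), (m.choose i : ℝ) * (K * C), fun x => ?_⟩
  by_cases hx : x ∈ tsupport (fun x : E × ℝ => G x.2 * B x)
  · have hxx : ‖x.1‖ ≤ ‖x.2‖ := hcl hx
    have hxn : ‖x‖ ≤ ‖x.2‖ := by rw [Prod.norm_def]; exact max_le hxx le_rfl
    have h1 := norm_iteratedFDeriv_mul_le hG hB.1 x (n := m) (by exact_mod_cast le_top)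
    calc ‖x‖ ^ k * _ ≤ (1 + ‖x.2‖) ^ k * _ :=
          mul_le_mul (by gcongr; linarith) h1 (norm_nonneg _) (by positivity)
      _ ≤ _ := by
        rw [Finset.mul_sum]
        refine Finset.sum_le_sum fun i hi => ?_
        have him : i ≤ m := by simp at hi; omega
        have h2 : ‖iteratedFDeriv ℝ i (fun x : E × ℝ => G x.2) x‖ ≤ ‖iteratedFDeriv ℝ i G x.2‖ := by
          have := (ContinuousLinearMap.snd ℝ E ℝ).iteratedFDeriv_comp_right (G.smooth ⊤) x
            (i := i) (by exact_mod_cast le_top)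
          change ‖iteratedFDeriv ℝ i (G ∘ ContinuousLinearMap.snd ℝ E ℝ) x‖ ≤ _
          rw [this]
          refine (ContinuousMultilinearMap.norm_compContinuousLinearMap_le _ _).trans ?_
          refine mul_le_of_le_one_right (norm_nonneg _) ?_
          exact Finset.prod_le_one (fun _ _ => norm_nonneg _)
            (fun _ _ => ContinuousLinearMap.norm_snd_le ℝ E ℝ)
        have h3 : ‖iteratedFDeriv ℝ (m - i) B x‖ ≤ C * (1 + ‖x.2‖) ^ l :=
          (hC (m - i) (by omega) x).trans (by gcongr)
        calc (1 + ‖x.2‖) ^ k * ((m.choose i : ℝ) * ‖iteratedFDeriv ℝ i (fun x : E × ℝ => G x.2) x‖ *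
              ‖iteratedFDeriv ℝ (m - i) B x‖)
            ≤ (1 + ‖x.2‖) ^ k * ((m.choose i : ℝ) * ‖iteratedFDeriv ℝ i G x.2‖ *
              (C * (1 + ‖x.2‖) ^ l)) := by gcongr
          _ = (m.choose i : ℝ) * (((1 + ‖x.2‖) ^ (k + l) * ‖iteratedFDeriv ℝ i G x.2‖) * C) := by
              rw [pow_add]; ring
          _ ≤ _ := by
              gcongr
              exact hGK i him x.2
  · have : iteratedFDeriv ℝ m (fun x : E × ℝ => G x.2 * B x) x = 0 := by
      by_contra hne
      exact hx (support_iteratedFDeriv_subset m hne)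
    change ‖x‖ ^ k * ‖iteratedFDeriv ℝ m (fun x : E × ℝ => G x.2 * B x) x‖ ≤ _
    rw [this, norm_zero, mul_zero]
    positivity

lemma prod_temp {D ι : Type*} [NormedAddCommGroup D] [NormedSpace ℝ D] (s : Finset ι)
    (f : ι → D → ℝ) (hf : ∀ i, (f i).HasTemperateGrowth) :
    (fun x => ∏ i ∈ s, f i x).HasTemperateGrowth := by
  classical
  induction s using Finset.induction_on with
  | empty => simp
  | insert a s ha ih =>
    simp only [Finset.prod_insert ha]
    have := hf a
    fun_prop

lemma exists_pos (n : ℕ) :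
    ∃ φ : SchwartzMap (EuclideanSpace ℝ (Fin n) × ℝ) ℝ,
      (∀ (α : Fin n → ℕ) (m : ℕ),
        (∫ x : EuclideanSpace ℝ (Fin n) × ℝ,
          (∏ i, x.1 i ^ α i) * x.2 ^ m * φ x) = if α = 0 ∧ m = 0 then 1 else 0) ∧
      ∀ x, φ x ≠ 0 → 2 ≤ x.2 ∧ 2 * ‖x.1‖ ≤ x.2 := by
  obtain ⟨g, g0, g1, gm⟩ := exists_g
  have kt := kap_temp
  have hkt : (fun x => kap x ^ n).HasTemperateGrowth := by fun_prop
  let G : SchwartzMap ℝ ℝ := SchwartzMap.smulLeftCLM ℝ (fun x => kap x ^ n) g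
  have hG : ∀ t, G t = kap t ^ n * g t := fun t =>
    SchwartzMap.smulLeftCLM_apply_apply hkt g t
  let b : ContDiffBump (0 : EuclideanSpace ℝ (Fin n)) := ⟨1 / 4, 1 / 2, by norm_num, by norm_num⟩
  let ρ : EuclideanSpace ℝ (Fin n) → ℝ := b.normed volume
  have hρ1 : ∫ y, ρ y = 1 := b.integral_normed
  have hρt : ρ.HasTemperateGrowth := b.hasCompactSupport_normed.hasTemperateGrowth b.contDiff_normed
  have hρs : ∀ y, ρ y ≠ 0 → ‖y‖ ≤ 1 / 2 := by
    intro y hy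
    have : y ∈ Function.support (b.normed volume) := hy
    rw [b.support_normed_eq] at this
    exact (mem_ball_zero_iff.1 this).le
  let B : EuclideanSpace ℝ (Fin n) × ℝ → ℝ := fun x => ρ (kap x.2 • x.1)
  have hfst : (fun x : EuclideanSpace ℝ (Fin n) × ℝ => x.1).HasTemperateGrowth :=
    (ContinuousLinearMap.fst ℝ (EuclideanSpace ℝ (Fin n)) ℝ).hasTemperateGrowth
  have hsnd : (fun x : EuclideanSpace ℝ (Fin n) × ℝ => x.2).HasTemperateGrowth :=
    (ContinuousLinearMap.snd ℝ (EuclideanSpace ℝ (Fin n)) ℝ).hasTemperateGrowth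
  have hks : (fun x : EuclideanSpace ℝ (Fin n) × ℝ => kap x.2).HasTemperateGrowth :=
    kt.comp hsnd
  have hB : B.HasTemperateGrowth := hρt.comp (hks.smul hfst)
  have hsupp : ∀ x : EuclideanSpace ℝ (Fin n) × ℝ, G x.2 * B x ≠ 0 → 2 ≤ x.2 ∧ 2 * ‖x.1‖ ≤ x.2 := by
    intro x hx
    have hx2 : 2 ≤ x.2 := by
      by_contra hh
      apply hx
      rw [hG, g0 _ (not_le.1 hh).le]; simp
    have h1 := hρs _ (right_ne_zero_of_mul hx)
    rw [kap_eq (by linarith), norm_smul, norm_inv, Real.norm_eq_abs, abs_of_pos (by linarith),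
      inv_mul_le_iff₀ (by linarith)] at h1
    exact ⟨hx2, by linarith⟩
  obtain ⟨φ, hφ⟩ := exists_schwartz G B hB (fun x hx => by
    obtain ⟨h1, h2⟩ := hsupp x hx
    rw [abs_of_pos (by linarith)]
    linarith [norm_nonneg x.1])
  refine ⟨φ, ?_, fun x hx => hsupp x (by rwa [← hφ])⟩
  intro α m
  have hcoord : ∀ i : Fin n, (fun x : EuclideanSpace ℝ (Fin n) × ℝ => x.1 i).HasTemperateGrowth := fun i =>
    ((EuclideanSpace.proj i).comp (ContinuousLinearMap.fst ℝ (EuclideanSpace ℝ (Fin n)) ℝ) :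
      (EuclideanSpace ℝ (Fin n) × ℝ) →L[ℝ] ℝ).hasTemperateGrowth
  have hp : (fun x : EuclideanSpace ℝ (Fin n) × ℝ => (∏ i, x.1 i ^ α i) * x.2 ^ m).HasTemperateGrowth := by
    refine Function.HasTemperateGrowth.mul ?_ (hsnd.pow m)
    exact prod_temp _ (fun i (x : EuclideanSpace ℝ (Fin n) × ℝ) => x.1 i ^ α i) (fun i => (hcoord i).pow _)
  have hint : Integrable (fun x : EuclideanSpace ℝ (Fin n) × ℝ => (∏ i, x.1 i ^ α i) * x.2 ^ m * φ x)
      ((volume : Measure (EuclideanSpace ℝ (Fin n))).prod (volume : Measure ℝ)) :=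
    integrable_temp_mul hp φ
  have hinner : ∀ t : ℝ, (∫ y : EuclideanSpace ℝ (Fin n), (∏ i, y i ^ α i) * t ^ m * φ (y, t)) =
      (∫ y : EuclideanSpace ℝ (Fin n), (∏ i, y i ^ α i) * ρ y) * (t ^ (m + ∑ i, α i) * g t) := by
    intro t
    by_cases ht : t ≤ 2
    · simp [hφ, hG, g0 t ht]
    push Not at ht
    have ht0 : t ≠ 0 := by positivity
    have e : ∀ y : EuclideanSpace ℝ (Fin n), (∏ i, y i ^ α i) * t ^ m * φ (y, t) =
        (t ^ (m + ∑ i, α i) * g t * (t⁻¹) ^ n) * ((∏ i, (t⁻¹ • y) i ^ α i) * ρ (t⁻¹ • y)) := by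
      intro y
      rw [hφ, hG]
      simp only [B, kap_eq (show (1 : ℝ) ≤ t by linarith)]
      have : (∏ i, y i ^ α i) = t ^ (∑ i, α i) * ∏ i, (t⁻¹ • y) i ^ α i := by
        rw [← Finset.prod_pow_eq_pow_sum, ← Finset.prod_mul_distrib]
        refine Finset.prod_congr rfl fun i _ => ?_
        rw [← mul_pow]
        simp [ht0]
      rw [this, pow_add]
      ring
    simp_rw [e]
    rw [integral_const_mul,
      Measure.integral_comp_inv_smul volume (fun y : EuclideanSpace ℝ (Fin n) => (∏ i, y i ^ α i) * ρ y) t,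
      finrank_euclideanSpace_fin, abs_of_pos (by positivity), smul_eq_mul, inv_pow]
    field_simp
  rw [Measure.volume_eq_prod, integral_prod_symm _ hint]
  simp only [hinner]
  rw [integral_const_mul]
  split_ifs with h
  · obtain ⟨rfl, rfl⟩ := h
    simp [g1, hρ1]
  · rw [gm, mul_zero]
    intro h0
    apply h
    have h1 : m = 0 := by omega
    have h2 : ∑ i, α i = 0 := by omega
    refine ⟨?_, h1⟩
    funext i
    exact Finset.sum_eq_zero_iff.1 h2 i (Finset.mem_univ i)

/-- Existence of a Schwartz function `φ₀` on `ℝ^{n+1} = ℝ^n × ℝ` with unit integral,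
all higher moments vanishing, supported in the downward cone
`{x_N < -|x'|} ∩ {x_N < -1}`. -/
theorem stmt12 (n : ℕ) :
    ∃ φ₀ : SchwartzMap (EuclideanSpace ℝ (Fin n) × ℝ) ℝ,
      (∫ x : EuclideanSpace ℝ (Fin n) × ℝ, φ₀ x) = 1 ∧
      (∀ (α : Fin n → ℕ) (m : ℕ), ¬(α = 0 ∧ m = 0) →
        (∫ x : EuclideanSpace ℝ (Fin n) × ℝ,
          (∏ i, x.1 i ^ α i) * x.2 ^ m * φ₀ x) = 0) ∧
      tsupport φ₀ ⊆
        {x : EuclideanSpace ℝ (Fin n) × ℝ | x.2 < -‖x.1‖} ∩ {x | x.2 < -1} := by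
  obtain ⟨φ, hm, hs⟩ := exists_pos n
  let L : (EuclideanSpace ℝ (Fin n) × ℝ) ≃L[ℝ] (EuclideanSpace ℝ (Fin n) × ℝ) :=
    (ContinuousLinearEquiv.refl ℝ _).prodCongr (ContinuousLinearEquiv.neg ℝ)
  have hL : ∀ x, SchwartzMap.compCLMOfContinuousLinearEquiv ℝ L φ x = φ (x.1, -x.2) := fun x => rfl
  have hmom : ∀ (α : Fin n → ℕ) (m : ℕ), (∫ x : EuclideanSpace ℝ (Fin n) × ℝ,
      (∏ i, x.1 i ^ α i) * x.2 ^ m * φ (x.1, -x.2)) = (-1) ^ m * if α = 0 ∧ m = 0 then 1 else 0 := by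
    intro α m
    rw [← hm α m, ← integral_const_mul]
    have hmp : MeasurePreserving (Prod.map id Neg.neg :
        EuclideanSpace ℝ (Fin n) × ℝ → EuclideanSpace ℝ (Fin n) × ℝ) volume volume :=
      (MeasurePreserving.id volume).prod (Measure.measurePreserving_neg volume)
    have hme : MeasurableEmbedding (Prod.map id Neg.neg :
        EuclideanSpace ℝ (Fin n) × ℝ → EuclideanSpace ℝ (Fin n) × ℝ) :=
      L.toHomeomorph.measurableEmbedding
    rw [← hmp.integral_comp hme]
    congr 1
    funext x
    simp only [id, Prod.map]
    rw [neg_pow x.2 m, neg_neg]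
    ring
  refine ⟨SchwartzMap.compCLMOfContinuousLinearEquiv ℝ L φ, ?_, ?_, ?_⟩
  · simpa [hL] using hmom 0 0
  · intro α m h
    simp_rw [hL]
    rw [hmom, if_neg h, mul_zero]
  · have hcl : tsupport (SchwartzMap.compCLMOfContinuousLinearEquiv ℝ L φ) ⊆
        {x : EuclideanSpace ℝ (Fin n) × ℝ | 2 ≤ -x.2 ∧ 2 * ‖x.1‖ ≤ -x.2} := by
      refine closure_minimal ?_ ?_
      · intro x hx
        exact hs (x.1, -x.2) hx
      · rw [Set.setOf_and]
        refine IsClosed.inter ?_ ?_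
        · exact isClosed_le (by fun_prop) (by fun_prop)
        · exact isClosed_le (by fun_prop) (by fun_prop)
    intro x hx
    obtain ⟨h1, h2⟩ := hcl hx
    have := norm_nonneg x.1
    constructor
    · show x.2 < -‖x.1‖
      linarith
    · show x.2 < -1
      linarith
end
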